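/- Let −1 < a < 2. For every x > 0 and every t ≠ 0 one has, as a generalized Riemann integral, lim_{R→∞} ∫₀^R S_a(x,y,t) y^a dy = 1. -/

import Mathlib

open MeasureTheory Filter Set

noncomputable def besselJ (ν : ℂ) (z : ℝ) : ℂ :=
  ∑' k : ℕ, ((-1 : ℂ) ^ k / (Complex.Gamma (k + 1) * Complex.Gamma (ν + k + 1))) *
    ((z : ℂ) / 2) ^ (2 * (k : ℂ) + ν)

noncomputable def Skernel (a x y t : ℝ) : ℂ :=
  if 0 < t then
    Complex.exp (-(Complex.I) * (((a + 1) * Real.pi / 4 : ℝ) : ℂ)) *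
      (((2 * |t|) ^ (-(a + 1) / 2) : ℝ) : ℂ) *
      (((x * y / (2 * |t|)) ^ ((1 - a) / 2) : ℝ) : ℂ) *
      besselJ (((a - 1) / 2 : ℝ) : ℂ) (x * y / (2 * |t|)) *
      Complex.exp (Complex.I * ((((x ^ 2 + y ^ 2) / (4 * |t|)) : ℝ) : ℂ))
  else
    Complex.exp ((Complex.I) * (((a + 1) * Real.pi / 4 : ℝ) : ℂ)) *
      (((2 * |t|) ^ (-(a + 1) / 2) : ℝ) : ℂ) *
      (((x * y / (2 * |t|)) ^ ((1 - a) / 2) : ℝ) : ℂ) *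
      besselJ (((a - 1) / 2 : ℝ) : ℂ) (x * y / (2 * |t|)) *
      Complex.exp (-(Complex.I) * ((((x ^ 2 + y ^ 2) / (4 * |t|)) : ℝ) : ℂ))

/-- The Bessel–Clifford function `∑ wᵏ / (k! Γ(ν + k + 1))`. -/
noncomputable def besselClifford (ν w : ℝ) : ℝ :=
  ∑' k : ℕ, w ^ k / (k.factorial * Real.Gamma (ν + k + 1))

lemma exists_inv_Gamma_add_natCast_le {ν : ℝ} (hν : -1 < ν) :
    ∃ C : ℝ, 0 ≤ C ∧ ∀ k : ℕ, (Real.Gamma (ν + k + 1))⁻¹ ≤ C := by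
  have h0 : 0 < Real.Gamma (ν + 1) := Real.Gamma_pos_of_pos (by linarith)
  have h1 : 0 < Real.Gamma (ν + 1 + 1) := Real.Gamma_pos_of_pos (by linarith)
  refine ⟨(Real.Gamma (ν + 1))⁻¹ + (Real.Gamma (ν + 1 + 1))⁻¹, by positivity, fun k => ?_⟩
  cases k with
  | zero => simpa using h1.le
  | succ k =>
    suffices h : Real.Gamma (ν + 1 + 1) ≤ Real.Gamma (ν + (k + 1 : ℕ) + 1) by
      have := inv_anti₀ h1 h
      have := inv_pos.2 h0
      linarith
    induction k with
    | zero => simp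
    | succ k ih =>
      have hk : (0 : ℝ) ≤ k := k.cast_nonneg
      have hpos : 0 < Real.Gamma (ν + (k + 1 : ℕ) + 1) :=
        Real.Gamma_pos_of_pos (by push_cast; linarith)
      have : Real.Gamma (ν + (k + 1 + 1 : ℕ) + 1) =
          (ν + (k + 1 : ℕ) + 1) * Real.Gamma (ν + (k + 1 : ℕ) + 1) := by
        rw [← Real.Gamma_add_one (by push_cast; linarith)]
        push_cast; ring_nf
      rw [this]
      push_cast at *
      nlinarith

lemma summable_besselClifford {ν : ℝ} (hν : -1 < ν) (w : ℝ) :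
    Summable fun k : ℕ => w ^ k / (k.factorial * Real.Gamma (ν + k + 1)) := by
  obtain ⟨C, hC, h⟩ := exists_inv_Gamma_add_natCast_le hν
  refine Summable.of_norm_bounded ((Real.summable_pow_div_factorial |w|).mul_right C) fun k => ?_
  have hG : 0 < Real.Gamma (ν + k + 1) :=
    Real.Gamma_pos_of_pos (by have := k.cast_nonneg (α := ℝ); linarith)
  rw [Real.norm_eq_abs, abs_div, abs_pow, abs_of_pos (a := _ * _) (by positivity), ← div_div,
    div_eq_mul_inv _ (Real.Gamma _)]
  gcongr
  exact h k

lemma hasDerivAt_besselClifford {ν : ℝ} (hν : -1 < ν) (w : ℝ) :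
    HasDerivAt (besselClifford ν) (besselClifford (ν + 1) w) w := by
  obtain ⟨C, hC, h⟩ := exists_inv_Gamma_add_natCast_le hν
  set r : ℝ := |w| + 1
  have hsum : Summable fun k : ℕ => k * r ^ (k - 1) / k.factorial * C := by
    refine Summable.mul_right C ((summable_nat_add_iff 1).1 ?_)
    refine (Real.summable_pow_div_factorial r).congr fun k => ?_
    rw [Nat.factorial_succ]
    push_cast
    have : (k : ℝ) + 1 ≠ 0 := by positivity
    rw [mul_div_mul_left _ _ this]
  have hw : w ∈ Metric.ball (0 : ℝ) r := by simp [r]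
  have key := hasDerivAt_tsum_of_isPreconnected
    (g := fun (k : ℕ) (z : ℝ) => z ^ k / (k.factorial * Real.Gamma (ν + k + 1)))
    (g' := fun (k : ℕ) (z : ℝ) => k * z ^ (k - 1) / (k.factorial * Real.Gamma (ν + k + 1)))
    hsum Metric.isOpen_ball (convex_ball (0 : ℝ) r).isPreconnected
    (fun k z _ => (hasDerivAt_pow k z).div_const _) (fun k z hz => ?_) hw
    (summable_besselClifford hν w) hw
  · refine key.congr_deriv ?_
    rw [besselClifford, tsum_eq_zero_add']
    · simp only [Nat.cast_zero, zero_mul, zero_div, zero_add]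
      refine tsum_congr fun k => ?_
      rw [Nat.factorial_succ, Nat.add_sub_cancel]
      push_cast
      rw [show ν + 1 + k + 1 = ν + (k + 1) + 1 by ring]
      have : (k : ℝ) + 1 ≠ 0 := by positivity
      rw [mul_assoc, mul_div_mul_left _ _ this]
    · refine (summable_besselClifford (ν := ν + 1) (by linarith) w).congr fun k => ?_
      rw [Nat.factorial_succ, Nat.add_sub_cancel]
      push_cast
      rw [show ν + 1 + k + 1 = ν + (k + 1) + 1 by ring]
      have : (k : ℝ) + 1 ≠ 0 := by positivity
      rw [mul_assoc, mul_div_mul_left _ _ this]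
  · have hG : 0 < Real.Gamma (ν + k + 1) :=
      Real.Gamma_pos_of_pos (by have := k.cast_nonneg (α := ℝ); linarith)
    have hz' : |z| ≤ r := (mem_ball_zero_iff.1 hz).le
    rw [Real.norm_eq_abs, abs_div, abs_mul, abs_pow, abs_of_pos (a := _ * Real.Gamma _)
      (by positivity), Nat.abs_cast, ← div_div, div_eq_mul_inv _ (Real.Gamma _)]
    gcongr
    exact h k

lemma continuous_besselClifford {ν : ℝ} (hν : -1 < ν) : Continuous (besselClifford ν) :=
  continuous_iff_continuousAt.2 fun w => (hasDerivAt_besselClifford hν w).continuousAt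

lemma besselClifford_recurrence {ν : ℝ} (hν : -1 < ν) (w : ℝ) :
    w * besselClifford (ν + 2) w + (ν + 1) * besselClifford (ν + 1) w = besselClifford ν w := by
  have h1 := summable_besselClifford (ν := ν + 1) (by linarith) w
  have h2 := summable_besselClifford (ν := ν + 2) (by linarith) w
  have hk : (Summable fun k : ℕ => (k : ℝ) * (w ^ k / (k.factorial * Real.Gamma (ν + 1 + k + 1)))) ∧
      ∑' k : ℕ, (k : ℝ) * (w ^ k / (k.factorial * Real.Gamma (ν + 1 + k + 1))) =
        w * besselClifford (ν + 2) w := by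
    have e : ∀ k : ℕ, ((k + 1 : ℕ) : ℝ) *
        (w ^ (k + 1) / ((k + 1).factorial * Real.Gamma (ν + 1 + (k + 1 : ℕ) + 1))) =
        w * (w ^ k / (k.factorial * Real.Gamma (ν + 2 + k + 1))) := fun k => by
      rw [Nat.factorial_succ]
      push_cast
      rw [show ν + 2 + k + 1 = ν + 1 + (k + 1) + 1 by ring]
      have : (k : ℝ) + 1 ≠ 0 := by positivity
      rw [mul_assoc, mul_div_assoc', mul_div_mul_left _ _ this, pow_succ', mul_div_assoc]
    have hs := (h2.mul_left w).congr fun k => (e k).symm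
    have hs' := (summable_nat_add_iff (G := ℝ)
      (f := fun k : ℕ => (k : ℝ) * (w ^ k / (k.factorial * Real.Gamma (ν + 1 + k + 1)))) 1).1 hs
    refine ⟨hs', ?_⟩
    rw [hs'.tsum_eq_zero_add]
    simp only [besselClifford]
    rw [← tsum_mul_left]
    simp only [e]
    simp
  rw [← hk.2]
  simp only [besselClifford]
  rw [← tsum_mul_left, ← hk.1.tsum_add (h1.mul_left _)]
  refine tsum_congr fun k => ?_
  have hk0 := k.cast_nonneg (α := ℝ)
  have hG : Real.Gamma (ν + k + 1) ≠ 0 := (Real.Gamma_pos_of_pos (by linarith)).ne'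
  have hne : ν + k + 1 ≠ 0 := by linarith
  rw [show ν + 1 + k + 1 = ν + k + 1 + 1 by ring, Real.Gamma_add_one hne]
  field_simp
  ring

/-- Laplace transform of a power, for complex frequencies. -/
lemma integral_rpow_mul_cexp_neg_mul_Ioi {s : ℝ} (hs : 0 < s) {p : ℂ} (hp : 0 < p.re) :
    ∫ t in Ioi (0 : ℝ), ((t ^ (s - 1) : ℝ) : ℂ) * Complex.exp (-(p * t)) =
      (1 / p) ^ (s : ℂ) * (Real.Gamma s : ℂ) := by
  set μ : Measure ℝ := (volume.restrict (Ioi 0)).withDensity fun t => ENNReal.ofReal (t ^ (s - 1))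
  have hmeas : Measurable fun t : ℝ => ENNReal.ofReal (t ^ (s - 1)) := by fun_prop
  have hMGF : ∀ z : ℂ, ProbabilityTheory.complexMGF id μ z =
      ∫ t in Ioi (0 : ℝ), ((t ^ (s - 1) : ℝ) : ℂ) * Complex.exp (z * t) := fun z => by
    rw [ProbabilityTheory.complexMGF, integral_withDensity_eq_integral_toReal_smul hmeas (by simp)]
    refine setIntegral_congr_fun measurableSet_Ioi fun t ht => ?_
    simp only [id]
    rw [ENNReal.toReal_ofReal (Real.rpow_nonneg (le_of_lt ht) _), Complex.real_smul]
  have hset : Iio 0 ⊆ interior (ProbabilityTheory.integrableExpSet id μ) := by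
    refine interior_maximal (fun r hr => ?_) isOpen_Iio
    change Integrable _ _
    rw [integrable_withDensity_iff_integrable_smul' hmeas (by simp)]
    have := integrableOn_rpow_mul_exp_neg_mul_rpow (p := 1) (s := s - 1) (b := -r) (by linarith)
      one_pos (by simpa using hr)
    refine IntegrableOn.congr_fun this (fun t ht => ?_) measurableSet_Ioi
    simp [ENNReal.toReal_ofReal (Real.rpow_nonneg (le_of_lt ht) _)]
  set U : Set ℂ := {z | z.re < 0}
  have hU : IsOpen U := isOpen_lt Complex.continuous_re continuous_const
  have hslit : ∀ z ∈ U, 1 / (-z) ∈ Complex.slitPlane := fun z hz => by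
    have hz : z.re < 0 := hz
    have h0 : z ≠ 0 := fun h => by simp [h] at hz
    refine Or.inl ?_
    rw [one_div, Complex.inv_re, Complex.neg_re]
    exact div_pos (by linarith) (Complex.normSq_pos.2 (neg_ne_zero.2 h0))
  have hne : ∀ z ∈ U, z ≠ 0 := fun z hz h => by simp [U, h] at hz
  have hf : AnalyticOnNhd ℂ (ProbabilityTheory.complexMGF id μ) U :=
    ProbabilityTheory.analyticOnNhd_complexMGF.mono fun z hz => hset hz
  have hg : AnalyticOnNhd ℂ (fun z : ℂ => (1 / (-z)) ^ (s : ℂ) * (Real.Gamma s : ℂ)) U := by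
    refine DifferentiableOn.analyticOnNhd (fun z hz => ?_) hU
    refine DifferentiableAt.differentiableWithinAt ?_
    have h : DifferentiableAt ℂ (fun z : ℂ => 1 / (-z)) z :=
      (differentiableAt_const _).div differentiableAt_id.neg (neg_ne_zero.2 (hne z hz))
    exact (h.cpow_const (hslit z hz)).mul_const _
  have hpre : IsPreconnected U := (convex_halfSpace_re_lt 0).isPreconnected
  have key := hf.eqOn_of_preconnected_of_frequently_eq hg hpre (z₀ := -1) (by simp [U]) ?_
  · have := key (x := -p) (by simpa [U] using hp)
    simpa [hMGF] using this
  · have htend : Tendsto (fun n : ℕ => -1 - ((1 / ((n : ℝ) + 1) : ℝ) : ℂ)) atTop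
        (nhdsWithin (-1) {-1}ᶜ) := by
      refine tendsto_nhdsWithin_iff.2 ⟨?_, Eventually.of_forall fun n => ?_⟩
      · have := (Complex.continuous_ofReal.tendsto 0).comp
          (tendsto_one_div_add_atTop_nhds_zero_nat (𝕜 := ℝ))
        simpa using this.const_sub (-1 : ℂ)
      · have : (n : ℂ) + 1 ≠ 0 := by exact_mod_cast n.succ_ne_zero
        simpa [sub_eq_self] using this
    refine htend.frequently (Frequently.of_forall fun n => ?_)
    set r : ℝ := 1 + 1 / ((n : ℝ) + 1)
    have hr : 0 < r := by positivity
    have e : -1 - ((1 / ((n : ℝ) + 1) : ℝ) : ℂ) = -(r : ℂ) := by simp [r]; ring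
    have h := Complex.integral_cpow_mul_exp_neg_mul_Ioi (a := s) (by simpa using hs) hr
    rw [e, hMGF, neg_neg, ← Complex.Gamma_ofReal, ← h]
    refine setIntegral_congr_fun measurableSet_Ioi fun t ht => ?_
    simp [Complex.ofReal_cpow (le_of_lt ht)]

/-- Abel summation for improper integrals. -/
lemma tendsto_integral_Ioi_mul_exp_of_tendsto {f : ℝ → ℂ} {l : ℂ} (hf : ContinuousOn f (Ioi 0))
    (hint : ∀ R : ℝ, IntervalIntegrable f volume 0 R)
    (hexp : ∀ ε : ℝ, 0 < ε → IntegrableOn (fun v => f v * Complex.exp (-(ε * v))) (Ioi 0))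
    (hl : Tendsto (fun R : ℝ => ∫ v in (0 : ℝ)..R, f v) atTop (nhds l)) :
    Tendsto (fun ε : ℝ => ∫ v in Ioi (0 : ℝ), f v * Complex.exp (-(ε * v)))
      (nhdsWithin 0 (Ioi 0)) (nhds l) := by
  set F : ℝ → ℂ := fun R => ∫ v in (0 : ℝ)..R, f v
  have hFc : Continuous F := intervalIntegral.continuous_primitive
    (fun a b => (hint a).symm.trans (hint b)) 0
  have hF0 : F 0 = 0 := intervalIntegral.integral_same
  have hFd : ∀ v ∈ Ioi (0 : ℝ), HasDerivAt F (f v) v := fun v hv =>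
    intervalIntegral.integral_hasDerivAt_right (hint v)
      (hf.stronglyMeasurableAtFilter isOpen_Ioi v hv) (hf.continuousAt (Ioi_mem_nhds hv))
  obtain ⟨C, hC⟩ : ∃ C : ℝ, ∀ v ∈ Ioi (0 : ℝ), ‖F v‖ ≤ C := by
    obtain ⟨R, hR⟩ := eventually_atTop.1 (hl.norm.eventually (gt_mem_nhds (lt_add_one ‖l‖)))
    obtain ⟨B, hB⟩ := isCompact_Icc.exists_bound_of_continuousOn (s := Icc 0 R) hFc.continuousOn
    refine ⟨max B (‖l‖ + 1), fun v hv => ?_⟩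
    rcases le_total v R with h | h
    · exact (hB v ⟨le_of_lt hv, h⟩).trans (le_max_left _ _)
    · exact (hR v h).le.trans (le_max_right _ _)
  have hexpint : ∀ ε : ℝ, 0 < ε →
      IntegrableOn (fun v : ℝ => F v * Complex.exp (-(ε * v))) (Ioi 0) := fun ε hε => by
    refine Integrable.mono' ((exp_neg_integrableOn_Ioi 0 hε).const_mul C) ?_ ?_
    · exact (by fun_prop : Continuous fun v : ℝ => F v * Complex.exp (-(ε * v))).aestronglyMeasurable
    · refine ae_restrict_of_forall_mem measurableSet_Ioi fun v hv => ?_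
      rw [norm_mul, Complex.norm_exp]
      simp
      gcongr
      exact hC v hv
  have hparts : ∀ ε : ℝ, 0 < ε → ∫ v in Ioi (0 : ℝ), f v * Complex.exp (-(ε * v)) =
      ∫ v in Ioi (0 : ℝ), F (ε⁻¹ * v) * Complex.exp (-v) := fun ε hε => by
    have hd : ∀ v ∈ Ioi (0 : ℝ), HasDerivAt (fun v : ℝ => F v * Complex.exp (-(ε * v)))
        (f v * Complex.exp (-(ε * v)) - ε * (F v * Complex.exp (-(ε * v)))) v := fun v hv => by
      have h1 : HasDerivAt (fun v : ℝ => Complex.exp (-(ε * v)))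
          (Complex.exp (-(ε * v)) * (-(ε * 1))) v :=
        ((Complex.ofRealCLM.hasDerivAt (x := v)).const_mul (ε : ℂ)).neg.cexp
      exact ((hFd v hv).mul h1).congr_deriv (by ring)
    have hzero : Tendsto (fun v : ℝ => F v * Complex.exp (-(ε * v))) atTop (nhds 0) := by
      have : Tendsto (fun v : ℝ => Complex.exp (-(ε * v))) atTop (nhds 0) := by
        refine Complex.tendsto_exp_comap_re_atBot.comp (tendsto_comap_iff.2 ?_)
        have : Tendsto (fun v : ℝ => -(ε * v)) atTop atBot :=
          tendsto_neg_atTop_atBot.comp (tendsto_id.const_mul_atTop hε)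
        refine this.congr fun v => ?_
        simp
      simpa using hl.mul this
    have h := integral_Ioi_of_hasDerivAt_of_tendsto
      (by fun_prop : Continuous fun v : ℝ => F v * Complex.exp (-(ε * v))).continuousWithinAt hd
      ((hexp ε hε).sub ((hexpint ε hε).const_mul _)) hzero
    rw [integral_sub (hexp ε hε) ((hexpint ε hε).const_mul _), integral_const_mul, hF0, zero_mul,
      sub_zero, sub_eq_zero] at h
    have hsub := integral_comp_mul_left_Ioi (fun v : ℝ => F (ε⁻¹ * v) * Complex.exp (-v)) 0 hε
    simp only [inv_mul_cancel_left₀ hε.ne', mul_zero, Complex.ofReal_mul] at hsub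
    rw [h, hsub, Complex.real_smul, ← mul_assoc, ← Complex.ofReal_mul, mul_inv_cancel₀ hε.ne',
      Complex.ofReal_one, one_mul]
  have hlim : Tendsto (fun ε : ℝ => ∫ v in Ioi (0 : ℝ), F (ε⁻¹ * v) * Complex.exp (-v))
      (nhdsWithin 0 (Ioi 0)) (nhds (∫ v in Ioi (0 : ℝ), l * Complex.exp (-v))) := by
    refine tendsto_integral_filter_of_dominated_convergence (fun v => C * Real.exp (-v)) ?_ ?_ ?_ ?_
    · refine Eventually.of_forall fun ε => Continuous.aestronglyMeasurable ?_
      fun_prop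
    · filter_upwards [self_mem_nhdsWithin] with ε hε
      refine ae_restrict_of_forall_mem measurableSet_Ioi fun v hv => ?_
      rw [norm_mul, Complex.norm_exp]
      simp
      gcongr
      exact hC _ (mem_Ioi.2 (mul_pos (inv_pos.2 hε) hv))
    · exact (integrableOn_exp_neg_Ioi 0).const_mul C
    · refine ae_restrict_of_forall_mem measurableSet_Ioi fun v hv => ?_
      exact (hl.comp (tendsto_inv_nhdsGT_zero.atTop_mul_const hv)).mul_const _
  have hone : ∫ v in Ioi (0 : ℝ), l * Complex.exp (-v) = l := by
    have : ∫ v in Ioi (0 : ℝ), Complex.exp (-v) = ((∫ v in Ioi (0 : ℝ), Real.exp (-v) : ℝ) : ℂ) := by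
      rw [← integral_complex_ofReal]; simp
    rw [integral_const_mul, this, integral_exp_neg_Ioi_zero]
    simp
  rw [hone] at hlim
  refine hlim.congr' ?_
  filter_upwards [self_mem_nhdsWithin] with ε hε using (hparts ε hε).symm

/-- Energy bound for solutions of `w h'' + h' / 2 + (1 + κ / w) h = 0`. -/
lemma exists_bound_of_bessel_ode {h h₁ h₂ : ℝ → ℝ} {κ : ℝ}
    (hd : ∀ w, 0 < w → HasDerivAt h (h₁ w) w) (hd₁ : ∀ w, 0 < w → HasDerivAt h₁ (h₂ w) w)
    (hode : ∀ w, 0 < w → w * h₂ w = -(h₁ w / 2) - (1 + κ / w) * h w) :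
    ∃ C : ℝ, 0 ≤ C ∧ ∀ w, 1 ≤ w → |h w| ≤ C ∧ |h₁ w| ≤ C ∧ |h₂ w| ≤ C * w⁻¹ := by
  set H : ℝ → ℝ := fun w => w * h₁ w ^ 2 + h w ^ 2
  set G : ℝ → ℝ := fun w => H w * Real.exp (2 * |κ| * (Real.sqrt w)⁻¹)
  have hG : ∀ w, 0 < w → HasDerivAt G ((-(2 * κ / w) * h w * h₁ w -
      |κ| / (w * Real.sqrt w) * H w) * Real.exp (2 * |κ| * (Real.sqrt w)⁻¹)) w := fun w hw => by
    have hs : 0 < Real.sqrt w := Real.sqrt_pos.2 hw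
    have hsq : Real.sqrt w ^ 2 = w := Real.sq_sqrt hw.le
    have hH : HasDerivAt H (-(2 * κ / w) * h w * h₁ w) w := by
      refine (((hasDerivAt_id w).mul ((hd₁ w hw).pow 2)).add ((hd w hw).pow 2)).congr_deriv ?_
      have := hode w hw
      simp only [id, Pi.pow_apply]
      linear_combination 2 * h₁ w * this
    have hE := (((Real.hasDerivAt_sqrt hw.ne').inv hs.ne').const_mul (2 * |κ|)).exp
    refine (hH.mul hE).congr_deriv ?_
    simp only [Pi.inv_apply]
    rw [hsq]
    field_simp
    ring
  have hanti : AntitoneOn G (Ici 1) := by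
    refine antitoneOn_of_deriv_nonpos (convex_Ici 1)
      (fun w hw => (hG w (one_pos.trans_le hw)).continuousAt.continuousWithinAt) ?_ ?_
    · intro w hw
      rw [interior_Ici] at hw
      exact (hG w (one_pos.trans hw)).differentiableAt.differentiableWithinAt
    · intro w hw
      rw [interior_Ici] at hw
      have hw0 : 0 < w := one_pos.trans hw
      rw [(hG w hw0).deriv]
      refine mul_nonpos_of_nonpos_of_nonneg ?_ (Real.exp_nonneg _)
      have hs : 0 < Real.sqrt w := Real.sqrt_pos.2 hw0
      have hsq : Real.sqrt w ^ 2 = w := Real.sq_sqrt hw0.le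
      have e : -(2 * κ / w) * h w * h₁ w - |κ| / (w * Real.sqrt w) * H w =
          -((|κ| * H w + κ * (2 * h w * (Real.sqrt w * h₁ w))) / (w * Real.sqrt w)) := by
        field_simp
        ring
      rw [e, neg_nonpos]
      refine div_nonneg ?_ (by positivity)
      have hHs : H w = (Real.sqrt w * h₁ w) ^ 2 + h w ^ 2 := by simp only [H]; rw [mul_pow, hsq]
      have hle : |2 * h w * (Real.sqrt w * h₁ w)| ≤ H w := by
        rw [hHs, abs_le]
        constructor <;> nlinarith [sq_nonneg (h w - Real.sqrt w * h₁ w),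
          sq_nonneg (h w + Real.sqrt w * h₁ w)]
      have h1 : |κ * (2 * h w * (Real.sqrt w * h₁ w))| ≤ |κ| * H w := by
        rw [abs_mul]
        gcongr
      linarith [neg_abs_le (κ * (2 * h w * (Real.sqrt w * h₁ w)))]
  set B : ℝ := Real.sqrt (G 1)
  have hB : 0 ≤ B := Real.sqrt_nonneg _
  have hbound : ∀ w, 1 ≤ w → |h w| ≤ B ∧ |h₁ w| ≤ B := fun w hw => by
    have hH0 : 0 ≤ H w := by positivity
    have hHG : H w ≤ G 1 := by
      refine le_trans ?_ (hanti self_mem_Ici (mem_Ici.2 hw) hw)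
      exact le_mul_of_one_le_right hH0 (Real.one_le_exp (by positivity))
    constructor <;> refine Real.abs_le_sqrt (le_trans ?_ hHG) <;> simp only [H] <;>
      nlinarith [sq_nonneg (h w), sq_nonneg (h₁ w)]
  refine ⟨(2 + |κ|) * B, by positivity, fun w hw => ?_⟩
  obtain ⟨b0, b1⟩ := hbound w hw
  have hw0 : 0 < w := by linarith
  have hk : 0 ≤ |κ| * B := by positivity
  refine ⟨by linarith, by linarith, ?_⟩
  rw [← div_eq_mul_inv, le_div_iff₀ hw0, ← abs_of_pos hw0, ← abs_mul, abs_of_pos hw0, mul_comm,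
    hode w hw0]
  have hκw : |κ / w| ≤ |κ| := by
    rw [abs_div, abs_of_pos hw0]
    exact div_le_self (abs_nonneg _) hw
  have h3 : |(1 + κ / w) * h w| ≤ (1 + |κ|) * B := by
    rw [abs_mul]
    gcongr
    exact (abs_add_le _ _).trans (by simpa using hκw)
  calc |-(h₁ w / 2) - (1 + κ / w) * h w|
      ≤ |-(h₁ w / 2)| + |(1 + κ / w) * h w| := abs_sub _ _
    _ ≤ B / 2 + (1 + |κ|) * B := by
      gcongr
      rw [abs_neg, abs_div, abs_two]
      gcongr
    _ ≤ (2 + |κ|) * B := by linarith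

/-- Oscillatory integrals of a slowly decaying amplitude converge. -/
lemma exists_tendsto_integral_mul_cexp {g g₁ g₂ : ℝ → ℝ} {b : ℝ} (hb : b ≠ 0)
    (hd : ∀ w, 0 < w → HasDerivAt g (g₁ w) w) (hd₁ : ∀ w, 0 < w → HasDerivAt g₁ (g₂ w) w)
    (hg : Tendsto g atTop (nhds 0)) (hg₁ : Tendsto g₁ atTop (nhds 0))
    (hg₂ : IntegrableOn g₂ (Ioi 1)) :
    ∃ l : ℂ, Tendsto (fun R : ℝ => ∫ w in (1 : ℝ)..R, (g w : ℂ) * Complex.exp (Complex.I * b * w))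
      atTop (nhds l) := by
  have hbI : Complex.I * b ≠ 0 := mul_ne_zero Complex.I_ne_zero (Complex.ofReal_ne_zero.2 hb)
  have hnorm : ∀ w : ℝ, ‖Complex.exp (Complex.I * b * w)‖ = 1 := fun w => by
    rw [Complex.norm_exp]
    simp
  have hint₂ : IntegrableOn
      (fun w : ℝ => ((g₂ w : ℂ) / (Complex.I * b) ^ 2) * Complex.exp (Complex.I * b * w))
      (Ioi 1) := by
    refine Integrable.mono (hg₂.ofReal.div_const ((Complex.I * b) ^ 2)) ?_ ?_
    · exact (hg₂.ofReal.div_const _).aestronglyMeasurable.mul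
        (by fun_prop : Continuous fun w : ℝ => Complex.exp (Complex.I * b * w)).aestronglyMeasurable
    · exact Eventually.of_forall fun w => by simp [hnorm]
  set Φ : ℝ → ℂ := fun w => ((g w : ℂ) / (Complex.I * b) - (g₁ w : ℂ) / (Complex.I * b) ^ 2) *
    Complex.exp (Complex.I * b * w)
  have hΦd : ∀ w, 0 < w → HasDerivAt Φ ((g w : ℂ) * Complex.exp (Complex.I * b * w) -
      ((g₂ w : ℂ) / (Complex.I * b) ^ 2) * Complex.exp (Complex.I * b * w)) w := fun w hw => by
    have hE : HasDerivAt (fun w : ℝ => Complex.exp (Complex.I * b * w))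
        (Complex.exp (Complex.I * b * w) * (Complex.I * b * 1)) w :=
      ((Complex.ofRealCLM.hasDerivAt (x := w)).const_mul (Complex.I * (b : ℂ))).cexp
    refine ((((hd w hw).ofReal_comp.div_const _).sub
      ((hd₁ w hw).ofReal_comp.div_const _)).mul hE).congr_deriv ?_
    have hb' : (b : ℂ) ≠ 0 := Complex.ofReal_ne_zero.2 hb
    simp only [Pi.sub_apply]
    field_simp
    ring
  have hΦ : Tendsto Φ atTop (nhds 0) := by
    have h1 : Tendsto (fun w => (g w : ℂ) / (Complex.I * b) - (g₁ w : ℂ) / (Complex.I * b) ^ 2)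
        atTop (nhds 0) := by
      have e0 := (Complex.continuous_ofReal.tendsto 0).comp hg
      have e1 := (Complex.continuous_ofReal.tendsto 0).comp hg₁
      simpa using (e0.div_const (Complex.I * b)).sub (e1.div_const ((Complex.I * b) ^ 2))
    rw [tendsto_zero_iff_norm_tendsto_zero] at h1 ⊢
    simpa [Φ, hnorm] using h1
  have hcont : ContinuousOn (fun w : ℝ => (g w : ℂ) * Complex.exp (Complex.I * b * w)) (Ioi 0) :=
    fun w hw => ((Complex.continuous_ofReal.continuousAt.comp (hd w hw).continuousAt).mul
      (by fun_prop)).continuousWithinAt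
  refine ⟨0 - Φ 1 + ∫ w in Ioi (1 : ℝ), ((g₂ w : ℂ) / (Complex.I * b) ^ 2) *
    Complex.exp (Complex.I * b * w), ?_⟩
  refine ((hΦ.sub_const (Φ 1)).add
    (intervalIntegral_tendsto_integral_Ioi 1 hint₂ tendsto_id)).congr' ?_
  filter_upwards [eventually_ge_atTop 1] with R hR
  have hsub : uIcc 1 R ⊆ Ioi 0 := by
    rw [uIcc_of_le hR]
    exact fun w hw => one_pos.trans_le hw.1
  have hi1 : IntervalIntegrable (fun w : ℝ => (g w : ℂ) * Complex.exp (Complex.I * b * w))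
      volume 1 R := (hcont.mono hsub).intervalIntegrable
  have hi2 : IntervalIntegrable (fun w : ℝ => ((g₂ w : ℂ) / (Complex.I * b) ^ 2) *
      Complex.exp (Complex.I * b * w)) volume 1 R :=
    (intervalIntegrable_iff_integrableOn_Ioc_of_le hR).2 (hint₂.mono_set Ioc_subset_Ioi_self)
  have := intervalIntegral.integral_eq_sub_of_hasDerivAt
    (fun w hw => hΦd w (hsub hw)) (hi1.sub hi2)
  rw [intervalIntegral.integral_sub hi1 hi2] at this
  simp only [id]
  rw [← this]
  ring

lemma hasDerivAt_rpow_mul {f : ℝ → ℝ} {f' w : ℝ} (s : ℝ) (hw : 0 < w) (hf : HasDerivAt f f' w) :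
    HasDerivAt (fun v => v ^ s * f v) (w ^ s * (s / w * f w + f')) w := by
  refine ((Real.hasDerivAt_rpow_const (p := s) (Or.inl hw.ne')).mul hf).congr_deriv ?_
  rw [Real.rpow_sub_one hw.ne']
  field_simp

/-- The amplitude `w ^ ν C_ν(-w)` and its derivatives decay like `w ^ (ν / 2 - 1 / 4)`, the second
derivative gaining a full power of `w`. -/
lemma exists_besselClifford_amplitude_bound {ν : ℝ} (hν : -1 < ν) :
    ∃ (g₁ g₂ : ℝ → ℝ) (C : ℝ), 0 ≤ C ∧
      (∀ w, 0 < w → HasDerivAt (fun v => v ^ ν * besselClifford ν (-v)) (g₁ w) w) ∧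
      (∀ w, 0 < w → HasDerivAt g₁ (g₂ w) w) ∧
      ∀ w, 1 ≤ w → |w ^ ν * besselClifford ν (-w)| ≤ C * w ^ (ν / 2 - 1 / 4) ∧
        |g₁ w| ≤ C * w ^ (ν / 2 - 1 / 4) ∧ |g₂ w| ≤ C * w ^ (ν / 2 - 1 / 4 - 1) := by
  have hC : ∀ {μ : ℝ}, -1 < μ → ∀ w, HasDerivAt (fun v => besselClifford μ (-v))
      (-besselClifford (μ + 1) (-w)) w := fun hμ w => by
    exact ((hasDerivAt_besselClifford hμ (-w)).comp w (hasDerivAt_neg w)).congr_deriv (by ring)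
  set α : ℝ := ν / 2 + 1 / 4 with hα
  set β : ℝ := ν / 2 - 1 / 4 with hβ
  set h : ℝ → ℝ := fun w => w ^ α * besselClifford ν (-w)
  set h₁ : ℝ → ℝ := fun w =>
    w ^ α * (α / w * besselClifford ν (-w) + -besselClifford (ν + 1) (-w))
  set h₂ : ℝ → ℝ := fun w =>
    w ^ α * (α / w * (α / w * besselClifford ν (-w) + -besselClifford (ν + 1) (-w)) +
      (-(α / w ^ 2) * besselClifford ν (-w) + α / w * -besselClifford (ν + 1) (-w) +
        besselClifford (ν + 2) (-w)))
  have hinv : ∀ (s w : ℝ), 0 < w → HasDerivAt (fun v : ℝ => s / v) (-(s / w ^ 2)) w :=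
    fun s w hw => ((hasDerivAt_inv hw.ne').const_mul s).congr_deriv (by ring)
  have hd : ∀ w, 0 < w → HasDerivAt h (h₁ w) w := fun w hw =>
    hasDerivAt_rpow_mul α hw (hC hν w)
  have hd₁ : ∀ w, 0 < w → HasDerivAt h₁ (h₂ w) w := fun w hw => by
    refine hasDerivAt_rpow_mul α hw ?_
    refine (((hinv α w hw).mul (hC hν w)).add (hC (μ := ν + 1) (by linarith) w).neg).congr_deriv ?_
    rw [neg_neg, show ν + 1 + 1 = ν + 2 by ring]
  obtain ⟨C, hC0, hb⟩ := exists_bound_of_bessel_ode (κ := (1 / 4 - ν ^ 2) / 4) hd hd₁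
    fun w hw => by
      have hrec := besselClifford_recurrence hν (-w)
      have e : besselClifford (ν + 2) (-w) =
          ((ν + 1) * besselClifford (ν + 1) (-w) - besselClifford ν (-w)) / w := by
        field_simp
        linarith
      simp only [h, h₁, h₂, e, hα]
      field_simp
      ring
  refine ⟨fun w => w ^ β * (β / w * h w + h₁ w), fun w => w ^ β * (β / w * (β / w * h w + h₁ w) +
    (-(β / w ^ 2) * h w + β / w * h₁ w + h₂ w)), (β ^ 2 + 3 * |β| + 1) * C, by positivity,
    fun w hw => ?_, fun w hw => ?_, fun w hw => ?_⟩
  · refine (hasDerivAt_rpow_mul β hw (hd w hw)).congr_of_eventuallyEq ?_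
    filter_upwards [Ioi_mem_nhds hw] with v hv
    simp only [h]
    rw [← mul_assoc, ← Real.rpow_add hv]
    congr 2
    simp only [hα, hβ]
    ring
  · exact hasDerivAt_rpow_mul β hw (((hinv β w hw).mul (hd w hw)).add (hd₁ w hw))
  · obtain ⟨b0, b1, b2⟩ := hb w hw
    have hw0 : 0 < w := one_pos.trans_le hw
    have hp : 0 < w ^ β := Real.rpow_pos_of_pos hw0 β
    have hwi : w⁻¹ ≤ 1 := inv_le_one_of_one_le₀ hw
    have hwi0 : 0 < w⁻¹ := inv_pos.2 hw0
    have hβ2 : 0 ≤ β ^ 2 * C := by positivity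
    have hβ1 : 0 ≤ |β| * C := by positivity
    have hK : C ≤ (β ^ 2 + 3 * |β| + 1) * C := by nlinarith
    refine ⟨?_, ?_, ?_⟩
    · have e : w ^ ν * besselClifford ν (-w) = w ^ β * h w := by
        simp only [h]
        rw [← mul_assoc, ← Real.rpow_add hw0]
        congr 2
        simp only [hα, hβ]
        ring
      rw [e, abs_mul, abs_of_pos hp, mul_comm]
      gcongr
      exact b0.trans hK
    · rw [abs_mul, abs_of_pos hp, mul_comm]
      gcongr
      have : |β / w * h w| ≤ |β| * C := by
        rw [abs_mul, abs_div, abs_of_pos hw0]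
        exact mul_le_mul (div_le_self (abs_nonneg _) hw) b0 (abs_nonneg _) (abs_nonneg _)
      refine (abs_add_le _ _).trans ?_
      linarith
    · rw [abs_mul, abs_of_pos hp, Real.rpow_sub_one hw0.ne']
      have e : β / w * (β / w * h w + h₁ w) + (-(β / w ^ 2) * h w + β / w * h₁ w + h₂ w) =
          (β ^ 2 * w⁻¹ * h w + (2 * β * h₁ w + -(β * w⁻¹ * h w))) * w⁻¹ + h₂ w := by
        field_simp
        ring
      have c1 : |β ^ 2 * w⁻¹ * h w| ≤ β ^ 2 * 1 * C := by
        rw [abs_mul, abs_mul, abs_of_pos hwi0, abs_of_nonneg (sq_nonneg β)]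
        gcongr
      have c2 : |2 * β * h₁ w| ≤ 2 * |β| * C := by
        rw [abs_mul, abs_mul, abs_two]
        gcongr
      have c3 : |-(β * w⁻¹ * h w)| ≤ |β| * 1 * C := by
        rw [abs_neg, abs_mul, abs_mul, abs_of_pos hwi0]
        gcongr
      have c4 : |β ^ 2 * w⁻¹ * h w + (2 * β * h₁ w + -(β * w⁻¹ * h w))| ≤
          (β ^ 2 + 3 * |β|) * C := by
        refine (abs_add_le _ _).trans ?_
        have := abs_add_le (2 * β * h₁ w) (-(β * w⁻¹ * h w))
        linarith
      rw [e]
      calc w ^ β * |(β ^ 2 * w⁻¹ * h w + (2 * β * h₁ w + -(β * w⁻¹ * h w))) * w⁻¹ + h₂ w|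
          ≤ w ^ β * ((β ^ 2 + 3 * |β|) * C * w⁻¹ + C * w⁻¹) := by
            gcongr
            refine (abs_add_le _ _).trans ?_
            rw [abs_mul, abs_of_pos hwi0]
            gcongr
        _ = (β ^ 2 + 3 * |β| + 1) * C * (w ^ β / w) := by ring

/-- Laplace transform of `v ^ ν C_ν(-v)`. -/
lemma integral_besselClifford_mul_cexp {ν : ℝ} (hν : -1 < ν) {p : ℂ} (hp : 0 < p.re) :
    ∫ v in Ioi (0 : ℝ), ((v ^ ν * besselClifford ν (-v) : ℝ) : ℂ) * Complex.exp (-(p * v)) =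
      (1 / p) ^ ((ν + 1 : ℝ) : ℂ) * Complex.exp (-(1 / p)) := by
  have hp0 : p ≠ 0 := fun h => by simp [h] at hp
  set F : ℕ → ℝ → ℂ := fun k v => (((-1) ^ k / (k.factorial * Real.Gamma (ν + k + 1)) : ℝ) : ℂ) *
    (((v ^ (ν + k + 1 - 1) : ℝ) : ℂ) * Complex.exp (-(p * v)))
  have hk : ∀ k : ℕ, 0 < ν + k + 1 := fun k => by
    have := k.cast_nonneg (α := ℝ)
    linarith
  have hnorm : ∀ k, ∀ v ∈ Ioi (0 : ℝ), ‖F k v‖ = 1 / (k.factorial * Real.Gamma (ν + k + 1)) *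
      (v ^ (ν + k + 1 - 1) * Real.exp (-(p.re * v))) := fun k v hv => by
    have hG := Real.Gamma_pos_of_pos (hk k)
    simp only [F]
    rw [norm_mul, norm_mul, Complex.norm_real, Complex.norm_real, Complex.norm_exp, norm_div,
      norm_pow, norm_neg, norm_one, one_pow, Real.norm_of_nonneg (Real.rpow_nonneg (le_of_lt hv) _),
      Real.norm_of_nonneg (by positivity)]
    simp
  have hint : ∀ k, IntegrableOn (F k) (Ioi 0) := fun k => by
    have h := integrableOn_rpow_mul_exp_neg_mul_rpow (p := 1) (s := ν + k + 1 - 1) (b := p.re)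
      (by linarith [hk k]) one_pos hp
    refine Integrable.mono' (h.const_mul (1 / (k.factorial * Real.Gamma (ν + k + 1)))) ?_ ?_
    · exact Measurable.aestronglyMeasurable (by fun_prop)
    · refine ae_restrict_of_forall_mem measurableSet_Ioi fun v hv => ?_
      rw [hnorm k v hv]
      simp
  have hsum : Summable fun k => ∫ v in Ioi (0 : ℝ), ‖F k v‖ := by
    refine ((Real.summable_pow_div_factorial (1 / p.re)).mul_left
      ((1 / p.re) ^ (ν + 1))).congr fun k => ?_
    rw [setIntegral_congr_fun measurableSet_Ioi (hnorm k), integral_const_mul,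
      Real.integral_rpow_mul_exp_neg_mul_Ioi (hk k) hp,
      show ν + k + 1 = ν + 1 + k by ring, Real.rpow_add (by positivity) (ν + 1),
      Real.rpow_natCast]
    have hG : Real.Gamma (ν + 1 + k) ≠ 0 := by
      have := (Real.Gamma_pos_of_pos (hk k)).ne'
      rwa [show ν + k + 1 = ν + 1 + k by ring] at this
    field_simp
  have key := hasSum_integral_of_summable_integral_norm hint hsum
  have hval : ∀ k, ∫ v in Ioi (0 : ℝ), F k v =
      (1 / p) ^ ((ν + 1 : ℝ) : ℂ) * ((-(1 / p)) ^ k / k.factorial) := fun k => by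
    have hG : (Real.Gamma (ν + k + 1) : ℂ) ≠ 0 :=
      Complex.ofReal_ne_zero.2 (Real.Gamma_pos_of_pos (hk k)).ne'
    simp only [F]
    rw [integral_const_mul, integral_rpow_mul_cexp_neg_mul_Ioi (hk k) hp]
    have e : (1 / p) ^ ((ν + k + 1 : ℝ) : ℂ) = (1 / p) ^ ((ν + 1 : ℝ) : ℂ) * (1 / p) ^ k := by
      rw [← Complex.cpow_natCast, ← Complex.cpow_add _ _ (one_div_ne_zero hp0)]
      congr 1
      push_cast
      ring
    rw [e, neg_pow (1 / p)]
    push_cast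
    field_simp
  have hexp : HasSum (fun k => ∫ v in Ioi (0 : ℝ), F k v)
      ((1 / p) ^ ((ν + 1 : ℝ) : ℂ) * Complex.exp (-(1 / p))) := by
    simp only [hval]
    rw [Complex.exp_eq_exp_ℂ]
    exact (NormedSpace.expSeries_div_hasSum_exp (-(1 / p))).mul_left _
  rw [← key.unique hexp]
  refine setIntegral_congr_fun measurableSet_Ioi fun v hv => ?_
  have hv : 0 < v := hv
  simp only [F]
  rw [besselClifford, ← tsum_mul_left, Complex.ofReal_tsum, ← tsum_mul_right]
  refine tsum_congr fun k => ?_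
  rw [show ν + k + 1 - 1 = ν + k by ring, Real.rpow_add hv, Real.rpow_natCast, neg_pow v]
  push_cast
  ring

lemma tendsto_integral_besselClifford_mul_cexp {ν : ℝ} (hν : -1 < ν) (hν' : ν < 1 / 2) {b : ℝ}
    (hb : b ≠ 0) :
    Tendsto (fun R : ℝ => ∫ v in (0 : ℝ)..R, ((v ^ ν * besselClifford ν (-v) : ℝ) : ℂ) *
      Complex.exp (Complex.I * b * v)) atTop
      (nhds ((1 / (-(Complex.I * b))) ^ ((ν + 1 : ℝ) : ℂ) *
        Complex.exp (-(1 / (-(Complex.I * b)))))) := by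
  set g : ℝ → ℝ := fun v => v ^ ν * besselClifford ν (-v)
  set f : ℝ → ℂ := fun v => (g v : ℂ) * Complex.exp (Complex.I * b * v)
  have hclif := continuous_besselClifford hν
  obtain ⟨g₁, g₂, C, hC, hd, hd₁, hbound⟩ := exists_besselClifford_amplitude_bound hν
  have hnorm : ∀ w : ℝ, ‖Complex.exp (Complex.I * b * w)‖ = 1 := fun w => by
    rw [Complex.norm_exp]
    simp
  have hdecay : Tendsto (fun w : ℝ => C * w ^ (ν / 2 - 1 / 4)) atTop (nhds 0) := by
    have := (tendsto_rpow_neg_atTop (y := -(ν / 2 - 1 / 4)) (by linarith)).const_mul C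
    simpa using this
  have hcont : ContinuousOn f (Ioi 0) := fun w hw =>
    ((Complex.continuous_ofReal.continuousAt.comp (hd w hw).continuousAt).mul
      (by fun_prop)).continuousWithinAt
  have hint : ∀ R : ℝ, IntervalIntegrable f volume 0 R := fun R => by
    have h : IntervalIntegrable (fun v : ℝ => ((v ^ ν : ℝ) : ℂ)) volume 0 R :=
      have h := intervalIntegral.intervalIntegrable_rpow' (a := 0) (b := R) hν
      ⟨h.1.ofReal, h.2.ofReal⟩
    refine (h.mul_continuousOn (g := fun v : ℝ => (besselClifford ν (-v) : ℂ) *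
      Complex.exp (Complex.I * b * v)) (by fun_prop)).congr fun v _ => ?_
    simp only [f, g]
    push_cast
    ring
  have hexp : ∀ ε : ℝ, 0 < ε → IntegrableOn (fun v => f v * Complex.exp (-(ε * v))) (Ioi 0) := by
    intro ε hε
    rw [← Ioc_union_Ioi_eq_Ioi zero_le_one]
    refine IntegrableOn.union ?_ ?_
    · exact (intervalIntegrable_iff_integrableOn_Ioc_of_le zero_le_one).1
        ((hint 1).mul_continuousOn (by fun_prop))
    · refine Integrable.mono' ((exp_neg_integrableOn_Ioi 1 hε).const_mul C) ?_ ?_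
      · refine ContinuousOn.aestronglyMeasurable ?_ measurableSet_Ioi
        exact (hcont.mono (Ioi_subset_Ioi zero_le_one)).mul (by fun_prop)
      · refine ae_restrict_of_forall_mem measurableSet_Ioi fun v hv => ?_
        have hv1 : 1 ≤ v := le_of_lt hv
        simp only [f]
        rw [norm_mul, norm_mul, hnorm, mul_one, Complex.norm_real, Complex.norm_exp]
        have h1 : ‖g v‖ ≤ C := (hbound v hv1).1.trans
          (mul_le_of_le_one_right hC (Real.rpow_le_one_of_one_le_of_nonpos hv1 (by linarith)))
        have h2 : (-((ε : ℂ) * v)).re = -ε * v := by simp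
        rw [h2]
        gcongr
  have hg₂ : IntegrableOn g₂ (Ioi 1) := by
    refine Integrable.mono' ((integrableOn_Ioi_rpow_of_lt (a := ν / 2 - 1 / 4 - 1) (by linarith)
      one_pos).const_mul C) ?_ (ae_restrict_of_forall_mem measurableSet_Ioi fun v hv =>
        (hbound v (le_of_lt hv)).2.2)
    refine (measurable_deriv g₁).aestronglyMeasurable.congr
      (ae_restrict_of_forall_mem measurableSet_Ioi fun v hv => ?_)
    exact (hd₁ v (one_pos.trans hv)).deriv
  obtain ⟨l, hl⟩ := exists_tendsto_integral_mul_cexp hb hd hd₁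
    (squeeze_zero_norm' ((eventually_ge_atTop 1).mono fun w hw => (hbound w hw).1) hdecay)
    (squeeze_zero_norm' ((eventually_ge_atTop 1).mono fun w hw => (hbound w hw).2.1) hdecay) hg₂
  have hlim : Tendsto (fun R : ℝ => ∫ v in (0 : ℝ)..R, f v) atTop
      (nhds ((∫ v in (0 : ℝ)..1, f v) + l)) := by
    refine (hl.const_add (∫ v in (0 : ℝ)..1, f v)).congr fun R => ?_
    exact intervalIntegral.integral_add_adjacent_intervals (hint 1) ((hint 1).symm.trans (hint R))
  have hbI : -(Complex.I * b) ≠ 0 :=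
    neg_ne_zero.2 (mul_ne_zero Complex.I_ne_zero (Complex.ofReal_ne_zero.2 hb))
  have hlaplace : Tendsto (fun ε : ℝ => ∫ v in Ioi (0 : ℝ), f v * Complex.exp (-(ε * v)))
      (nhdsWithin 0 (Ioi 0)) (nhds ((1 / (-(Complex.I * b))) ^ ((ν + 1 : ℝ) : ℂ) *
        Complex.exp (-(1 / (-(Complex.I * b)))))) := by
    have hslit : 1 / (-(Complex.I * b)) ∈ Complex.slitPlane := by
      have e : 1 / (-(Complex.I * b)) = ((b⁻¹ : ℝ) : ℂ) * Complex.I := by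
        have : (b : ℂ) ≠ 0 := Complex.ofReal_ne_zero.2 hb
        push_cast
        field_simp
        simp
      refine Or.inr ?_
      rw [e]
      simpa using hb
    have hp : Tendsto (fun ε : ℝ => 1 / ((ε : ℂ) - Complex.I * b)) (nhdsWithin 0 (Ioi 0))
        (nhds (1 / (-(Complex.I * b)))) := by
      refine tendsto_nhdsWithin_of_tendsto_nhds (Tendsto.div tendsto_const_nhds ?_ hbI)
      have : Continuous fun ε : ℝ => (ε : ℂ) - Complex.I * b := by fun_prop
      simpa using this.tendsto 0
    have hcpow := (hp.cpow (tendsto_const_nhds (x := ((ν + 1 : ℝ) : ℂ))) hslit).mul hp.neg.cexp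
    refine hcpow.congr' ?_
    filter_upwards [self_mem_nhdsWithin] with ε hε
    have hε : 0 < ε := hε
    rw [← integral_besselClifford_mul_cexp hν (p := ε - Complex.I * b) (by simpa using hε)]
    refine integral_congr_ae (Eventually.of_forall fun v => ?_)
    simp only [f, g]
    rw [mul_assoc, ← Complex.exp_add]
    congr 2
    ring
  rw [tendsto_nhds_unique hlaplace (tendsto_integral_Ioi_mul_exp_of_tendsto hcont hint hexp hlim)]
  exact hlim

lemma besselJ_eq_besselClifford (ν : ℝ) {z : ℝ} (hz : 0 < z) :
    besselJ (ν : ℂ) z = (((z / 2) ^ ν * besselClifford ν (-(z / 2) ^ 2) : ℝ) : ℂ) := by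
  have hz2 : 0 < z / 2 := by positivity
  rw [besselJ, besselClifford, ← tsum_mul_left, Complex.ofReal_tsum]
  refine tsum_congr fun k => ?_
  have h1 : ((z : ℂ) / 2) ^ (2 * (k : ℂ) + ν) = (((z / 2) ^ (2 * k) * (z / 2) ^ ν : ℝ) : ℂ) := by
    rw [← Real.rpow_natCast, ← Real.rpow_add hz2,
      Complex.ofReal_cpow hz2.le]
    push_cast
    rfl
  have h2 : Complex.Gamma (ν + k + 1) = (Real.Gamma (ν + k + 1) : ℂ) := by
    rw [← Complex.Gamma_ofReal]
    push_cast
    rfl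
  rw [h1, h2, Complex.Gamma_nat_eq_factorial, neg_pow ((z / 2) ^ 2), ← pow_mul]
  push_cast
  ring

lemma one_div_neg_I_mul_cpow {b σ : ℝ} (hσ : σ = 1 ∨ σ = -1) (hb : 0 < σ * b) (s : ℝ) :
    (1 / (-(Complex.I * b))) ^ (s : ℂ) =
      (((σ * b) ^ (-s) : ℝ) : ℂ) * Complex.exp (Complex.I * ((σ * s * Real.pi / 2 : ℝ) : ℂ)) := by
  have hσ2 : (σ : ℂ) * σ = 1 := by rcases hσ with h | h <;> simp [h]
  have hσ0 : (σ : ℂ) ≠ 0 := left_ne_zero_of_mul_eq_one hσ2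
  have hb0 : (b : ℂ) ≠ 0 := Complex.ofReal_ne_zero.2 fun h => by simp [h] at hb
  have hlog : Complex.log (σ * Complex.I) = σ * Real.pi / 2 * Complex.I := by
    rcases hσ with h | h <;> simp [h, Complex.log_I, Complex.log_neg_I]
    ring
  have e : 1 / (-(Complex.I * b)) = (((σ * b)⁻¹ : ℝ) : ℂ) * (σ * Complex.I) := by
    push_cast
    field_simp
    simp
  have hne : (σ : ℂ) * Complex.I ≠ 0 := mul_ne_zero hσ0 Complex.I_ne_zero
  have hinv : 0 < (σ * b)⁻¹ := inv_pos.2 hb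
  rw [e, Complex.cpow_def_of_ne_zero (mul_ne_zero (Complex.ofReal_ne_zero.2 hinv.ne') hne),
    Complex.log_ofReal_mul hinv hne, hlog, Real.log_inv, Real.rpow_def_of_pos hb,
    Complex.ofReal_exp, ← Complex.exp_add]
  congr 1
  push_cast
  ring

/-- The substitution `v = c y ^ 2`. -/
lemma integral_comp_mul_sq (F : ℝ → ℂ) {c R : ℝ} (hc : 0 < c) (hR : 0 ≤ R) :
    ∫ y in (0 : ℝ)..R, ((2 * c * y : ℝ) : ℂ) * F (c * y ^ 2) =
      ∫ v in (0 : ℝ)..(c * R ^ 2), F v := by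
  have himage : image (fun y : ℝ => c * y ^ 2) (Ioc 0 R) = Ioc 0 (c * R ^ 2) := by
    ext v
    constructor
    · rintro ⟨y, ⟨hy0, hyR⟩, rfl⟩
      exact ⟨by positivity, by simp only; gcongr⟩
    · rintro ⟨hv0, hvR⟩
      refine ⟨Real.sqrt (v / c), ⟨Real.sqrt_pos.2 (by positivity), ?_⟩, ?_⟩
      · rw [Real.sqrt_le_left hR, div_le_iff₀ hc]
        linarith
      · simp only
        rw [Real.sq_sqrt (by positivity)]
        field_simp
  have hinj : InjOn (fun y : ℝ => c * y ^ 2) (Ioc 0 R) := fun y hy y' hy' h =>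
    (pow_left_inj₀ hy.1.le hy'.1.le two_ne_zero).1 (mul_left_cancel₀ hc.ne' h)
  have h := integral_image_eq_integral_abs_deriv_smul (f' := fun y => c * (2 * y)) measurableSet_Ioc
    (fun y _ => (((hasDerivAt_pow 2 y).const_mul c).congr_deriv (by simp)).hasDerivWithinAt) hinj F
  rw [himage] at h
  rw [intervalIntegral.integral_of_le hR, intervalIntegral.integral_of_le (by positivity), h]
  refine setIntegral_congr_fun measurableSet_Ioc fun y hy => ?_
  have hy0 : 0 < y := hy.1
  rw [abs_of_pos (by positivity), Complex.real_smul]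
  congr 2
  ring

lemma Skernel_mul_rpow_eq {a x y t σ : ℝ} (hx : 0 < x) (hy : 0 < y) (ht : t ≠ 0)
    (hσ : 0 < t ∧ σ = 1 ∨ t < 0 ∧ σ = -1) :
    Skernel a x y t * ((y ^ a : ℝ) : ℂ) =
      Complex.exp (-(Complex.I * ((σ * ((a - 1) / 2 + 1) * Real.pi / 2 : ℝ) : ℂ))) *
        (((σ * (4 * t / x ^ 2)) ^ ((a - 1) / 2 + 1) : ℝ) : ℂ) *
        Complex.exp (1 / (-(Complex.I * ((4 * t / x ^ 2 : ℝ) : ℂ)))) *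
        (((2 * (x ^ 2 / (16 * t ^ 2)) * y : ℝ) : ℂ) *
          ((((x ^ 2 / (16 * t ^ 2) * y ^ 2) ^ ((a - 1) / 2) *
            besselClifford ((a - 1) / 2) (-(x ^ 2 / (16 * t ^ 2) * y ^ 2)) : ℝ) : ℂ) *
            Complex.exp (Complex.I * ((4 * t / x ^ 2 : ℝ) : ℂ) *
              ((x ^ 2 / (16 * t ^ 2) * y ^ 2 : ℝ) : ℂ)))) := by
  set ν : ℝ := (a - 1) / 2 with hν
  have habs : |t| = σ * t := by
    rcases hσ with ⟨h, rfl⟩ | ⟨h, rfl⟩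
    · rw [abs_of_pos h, one_mul]
    · rw [abs_of_neg h, neg_one_mul]
  have hT : 0 < |t| := abs_pos.2 ht
  have htT : t ^ 2 = |t| ^ 2 := (sq_abs t).symm
  have hz : 0 < x * y / (2 * |t|) := by positivity
  have hS : Skernel a x y t =
      Complex.exp (-(Complex.I * ((σ * (ν + 1) * Real.pi / 2 : ℝ) : ℂ))) *
        (((2 * |t|) ^ (-(a + 1) / 2) : ℝ) : ℂ) *
        (((x * y / (2 * |t|)) ^ ((1 - a) / 2) : ℝ) : ℂ) *
        besselJ (ν : ℂ) (x * y / (2 * |t|)) *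
        Complex.exp (Complex.I * (((x ^ 2 + y ^ 2) / (4 * t) : ℝ) : ℂ)) := by
    rcases hσ with ⟨h, rfl⟩ | ⟨h, rfl⟩
    · rw [Skernel, if_pos h, abs_of_pos h]
      congr 5
      simp only [hν]
      push_cast
      ring
    · rw [Skernel, if_neg h.le.not_gt, abs_of_neg h]
      congr 2
      · congr 3
        simp only [hν]
        push_cast
        ring
      · have : (t : ℂ) ≠ 0 := Complex.ofReal_ne_zero.2 ht
        push_cast
        field_simp
  have hexp : Complex.exp (Complex.I * (((x ^ 2 + y ^ 2) / (4 * t) : ℝ) : ℂ)) =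
      Complex.exp (1 / (-(Complex.I * ((4 * t / x ^ 2 : ℝ) : ℂ)))) *
        Complex.exp (Complex.I * ((4 * t / x ^ 2 : ℝ) : ℂ) *
          ((x ^ 2 / (16 * t ^ 2) * y ^ 2 : ℝ) : ℂ)) := by
    rw [← Complex.exp_add]
    congr 1
    have h1 : (t : ℂ) ≠ 0 := Complex.ofReal_ne_zero.2 ht
    have h2 : (x : ℂ) ≠ 0 := Complex.ofReal_ne_zero.2 hx.ne'
    push_cast
    field_simp
    simp only [Complex.I_sq]
    ring
  have hreal : (2 * |t|) ^ (-(a + 1) / 2) * (x * y / (2 * |t|)) ^ ((1 - a) / 2) *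
      (x * y / (2 * |t|) / 2) ^ ν * y ^ a = (σ * (4 * t / x ^ 2)) ^ (ν + 1) *
        (2 * (x ^ 2 / (16 * t ^ 2)) * y) * (x ^ 2 / (16 * t ^ 2) * y ^ 2) ^ ν := by
    have e1 : σ * (4 * t / x ^ 2) = 4 * |t| / x ^ 2 := by rw [habs]; ring
    rw [e1, htT]
    refine Real.log_injOn_pos (mem_Ioi.2 (by positivity)) (mem_Ioi.2 (by positivity)) ?_
    simp (disch := positivity) only [Real.log_mul, Real.log_div, Real.log_rpow, Real.log_pow]
    rw [show (16 : ℝ) = 2 ^ 4 by norm_num, show (4 : ℝ) = 2 ^ 2 by norm_num, Real.log_pow,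
      Real.log_pow, show a = 2 * ν + 1 by rw [hν]; ring]
    push_cast
    ring
  have harg : (x * y / (2 * |t|) / 2) ^ 2 = x ^ 2 / (16 * t ^ 2) * y ^ 2 := by
    rw [htT]
    field_simp
    norm_num
  rw [hS, hexp, besselJ_eq_besselClifford ν hz, harg]
  have hreal' := congrArg (fun r : ℝ => (r : ℂ)) hreal
  simp only [Complex.ofReal_mul] at hreal' ⊢
  linear_combination Complex.exp (-(Complex.I * ((σ * (ν + 1) * Real.pi / 2 : ℝ) : ℂ))) *
    (besselClifford ν (-(x ^ 2 / (16 * t ^ 2) * y ^ 2)) : ℂ) *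
    Complex.exp (1 / (-(Complex.I * ((4 * t / x ^ 2 : ℝ) : ℂ)))) *
    Complex.exp (Complex.I * ((4 * t / x ^ 2 : ℝ) : ℂ) *
      (((x ^ 2 / (16 * t ^ 2) : ℝ) : ℂ) * ((y ^ 2 : ℝ) : ℂ))) * hreal'

/-- For `-1 < a < 2`, `x > 0`, `t ≠ 0`, the kernel has total mass one as a generalized
Riemann integral: `lim_{R→∞} ∫₀^R S_a(x,y,t) y^a dy = 1`. -/
theorem kernel_total_mass (a : ℝ) (ha1 : -1 < a) (ha2 : a < 2) (x t : ℝ)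
    (hx : 0 < x) (ht : t ≠ 0) :
    Tendsto (fun R : ℝ => ∫ y in (0:ℝ)..R, Skernel a x y t * ((y ^ a : ℝ) : ℂ))
      atTop (nhds 1) := by
  obtain ⟨σ, hσ⟩ : ∃ σ : ℝ, 0 < t ∧ σ = 1 ∨ t < 0 ∧ σ = -1 := by
    rcases ht.lt_or_gt with h | h
    · exact ⟨-1, Or.inr ⟨h, rfl⟩⟩
    · exact ⟨1, Or.inl ⟨h, rfl⟩⟩
  have hσ' : σ = 1 ∨ σ = -1 := hσ.imp And.right And.right
  have hσt : 0 < σ * t := by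
    rcases hσ with ⟨h, rfl⟩ | ⟨h, rfl⟩ <;> linarith
  set ν : ℝ := (a - 1) / 2 with hν
  set b : ℝ := 4 * t / x ^ 2 with hb
  set c : ℝ := x ^ 2 / (16 * t ^ 2)
  have hc0 : 0 < c := by positivity
  have hb0 : b ≠ 0 := div_ne_zero (mul_ne_zero four_ne_zero ht) (by positivity)
  have hσb : 0 < σ * b := by
    rw [show σ * b = 4 * (σ * t) / x ^ 2 by rw [hb]; ring]
    positivity
  set K : ℂ := Complex.exp (-(Complex.I * ((σ * (ν + 1) * Real.pi / 2 : ℝ) : ℂ))) *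
    (((σ * b) ^ (ν + 1) : ℝ) : ℂ) * Complex.exp (1 / (-(Complex.I * (b : ℂ))))
  have hR : Tendsto (fun R : ℝ => c * R ^ 2) atTop atTop :=
    (tendsto_pow_atTop two_ne_zero).const_mul_atTop hc0
  have hlim := ((tendsto_integral_besselClifford_mul_cexp (ν := ν) (by rw [hν]; linarith)
    (by rw [hν]; linarith) hb0).comp hR).const_mul K
  have hone : K * ((1 / (-(Complex.I * b))) ^ ((ν + 1 : ℝ) : ℂ) *
      Complex.exp (-(1 / (-(Complex.I * b))))) = 1 := by
    have h1 : (((σ * b) ^ (ν + 1) : ℝ) : ℂ) * (((σ * b) ^ (-(ν + 1)) : ℝ) : ℂ) = 1 := by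
      rw [← Complex.ofReal_mul, ← Real.rpow_add hσb, add_neg_cancel, Real.rpow_zero,
        Complex.ofReal_one]
    rw [one_div_neg_I_mul_cpow hσ' hσb, Complex.exp_neg (1 / _)]
    simp only [K]
    rw [Complex.exp_neg (Complex.I * _)]
    field_simp
    exact h1
  rw [hone] at hlim
  refine hlim.congr' ?_
  filter_upwards [eventually_ge_atTop 0] with R hR0
  simp only [Function.comp]
  rw [← integral_comp_mul_sq _ hc0 hR0, ← intervalIntegral.integral_const_mul,
    intervalIntegral.integral_of_le hR0, intervalIntegral.integral_of_le hR0]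
  exact setIntegral_congr_fun measurableSet_Ioc fun y hy =>
    (Skernel_mul_rpow_eq hx hy.1 ht hσ).symm
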